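/- For every β ≥ 0, every continuous ρ_1 : [-1,1] → [0,1] and every C^1 function v : [-1,1] → ℝ, ∫_{-1}^{1} v'(u) [ v'(u) - β χ(ρ_1(u)) d/du (J^neum ⋆ v)(u) ] du ≥ (1 - β/4) ∫_{-1}^{1} (v'(u))² du. -/

import Mathlib

open MeasureTheory Set

noncomputable section

/-- The Neumann (reflected) Kac kernel. -/
def Jneum (j : ℝ → ℝ) (u v : ℝ) : ℝ := j (v - u) + j (2 - v - u) + j (-2 - v - u)

/-- Convolution with the Neumann kernel: `(J^neum ⋆ m)(u) = ∫_{-1}^1 J^neum(u,v) m(v) dv`. -/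
def convJ (j m : ℝ → ℝ) (u : ℝ) : ℝ := ∫ v in (-1:ℝ)..1, Jneum j u v * m v

/-- Mobility `χ(ρ) = ρ(1-ρ)`. -/
def chi (ρ : ℝ) : ℝ := ρ * (1 - ρ)

/-!
The derivative of `J^neum ⋆ v` is `v'` integrated against the kernel with *odd* reflections at `±1`,
which is dominated by `J^neum`; hence `|(J^neum ⋆ v)'| ≤ J^neum ⋆ |v'|`. As `J^neum` is
symmetric with row integrals `∫ j`, the Schur test bounds its quadratic form by `(∫ j) ‖v'‖²`, and
`β χ(ρ₁) ≤ β / 4` concludes.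

For the derivative, integrate `J^neum ⋆ v` by parts *before* differentiating: the derivative in `u`
then falls on a primitive of `j`, and the boundary terms have zero derivative.
-/

section ParametricIntegral

variable {E : Type*} [NormedAddCommGroup E] [NormedSpace ℝ E]

theorem hasDerivAt_intervalIntegral_of_continuous {F F' : ℝ → ℝ → E} (a b x₀ : ℝ)
    (hF : ∀ x, Continuous (F x)) (hF' : Continuous (Function.uncurry F'))
    (hderiv : ∀ x t, HasDerivAt (fun x => F x t) (F' x t) x) :
    HasDerivAt (fun x => ∫ t in a..b, F x t) (∫ t in a..b, F' x₀ t) x₀ := by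
  obtain ⟨C, hC⟩ := ((isCompact_closedBall x₀ 1).prod
    (isCompact_uIcc (a := a) (b := b))).exists_bound_of_continuousOn hF'.continuousOn
  refine (intervalIntegral.hasDerivAt_integral_of_dominated_loc_of_deriv_le
    (bound := fun _ => C) (Metric.closedBall_mem_nhds x₀ one_pos)
    (.of_forall fun x => (hF x).aestronglyMeasurable) ((hF x₀).intervalIntegrable a b)
    (hF'.uncurry_left x₀).aestronglyMeasurable ?_ intervalIntegrable_const
    (.of_forall fun t _ x _ => hderiv x t)).2
  exact .of_forall fun t ht x hx => hC (x, t) ⟨hx, uIoc_subset_uIcc ht⟩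

theorem intervalIntegral_swap_of_continuous {F : ℝ → ℝ → E} (a b c d : ℝ)
    (hF : Continuous (Function.uncurry F)) :
    ∫ x in a..b, ∫ y in c..d, F x y = ∫ y in c..d, ∫ x in a..b, F x y :=
  intervalIntegral_intervalIntegral_swap <|
    (hF.continuousOn.integrableOn_compact (isCompact_uIcc.prod isCompact_uIcc)).mono_set
      (prod_mono uIoc_subset_uIcc uIoc_subset_uIcc)

end ParametricIntegral

section SchurTest

theorem mul_integral_mul_le_add_div_two {g f : ℝ → ℝ} {a b : ℝ} (hab : a ≤ b) (hg : Continuous g)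
    (hg_nonneg : ∀ y, 0 ≤ g y) (hf : Continuous f) (c : ℝ) :
    c * ∫ y in a..b, g y * f y ≤
      (c ^ 2 * (∫ y in a..b, g y) + ∫ y in a..b, g y * f y ^ 2) / 2 := by
  have pointwise (y : ℝ) : c * (g y * f y) ≤ (c ^ 2 * g y + g y * f y ^ 2) / 2 := by
    linarith [mul_nonneg (hg_nonneg y) (sq_nonneg (c - f y))]
  rw [← intervalIntegral.integral_const_mul, ← intervalIntegral.integral_const_mul,
    ← intervalIntegral.integral_add, ← intervalIntegral.integral_div]
  · exact intervalIntegral.integral_mono_on hab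
      (Continuous.intervalIntegrable (by fun_prop) a b)
      (Continuous.intervalIntegrable (by fun_prop) a b) fun y _ => pointwise y
  all_goals exact Continuous.intervalIntegrable (by fun_prop) a b

theorem integral_mul_integral_mul_le_of_symm {k : ℝ → ℝ → ℝ} {f : ℝ → ℝ} {a b M : ℝ}
    (hab : a ≤ b) (hk : Continuous (Function.uncurry k)) (hk_nonneg : ∀ u y, 0 ≤ k u y)
    (hk_symm : ∀ u y, k u y = k y u) (hk_row : ∀ u ∈ Icc a b, ∫ y in a..b, k u y ≤ M)
    (hf : Continuous f) :
    ∫ u in a..b, f u * ∫ y in a..b, k u y * f y ≤ M * ∫ u in a..b, f u ^ 2 := by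
  set row : ℝ → ℝ := fun u => ∫ y in a..b, k u y
  have sq_row_cont : Continuous fun u => f u ^ 2 * row u := (hf.pow 2).mul
    (intervalIntegral.continuous_parametric_intervalIntegral_of_continuous' hk a b)
  have form_cont (g : ℝ → ℝ) (hg : Continuous g) : Continuous fun u => ∫ y in a..b, k u y * g y :=
    intervalIntegral.continuous_parametric_intervalIntegral_of_continuous'
      (hk.mul (hg.comp continuous_snd)) a b
  have form_sq_cont := form_cont (fun y => f y ^ 2) (by fun_prop)
  have swap : ∫ u in a..b, ∫ y in a..b, k u y * f y ^ 2 = ∫ u in a..b, f u ^ 2 * row u := by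
    rw [intervalIntegral_swap_of_continuous (F := fun u y => k u y * f y ^ 2) a b a b
      (hk.fun_mul ((hf.comp continuous_snd).fun_pow 2))]
    refine intervalIntegral.integral_congr fun y _ => ?_
    simp only [intervalIntegral.integral_mul_const, hk_symm _ y, row, mul_comm]
  calc ∫ u in a..b, f u * ∫ y in a..b, k u y * f y
      ≤ ∫ u in a..b, (f u ^ 2 * row u + ∫ y in a..b, k u y * f y ^ 2) / 2 :=
        intervalIntegral.integral_mono_on hab
          ((hf.mul (form_cont f hf)).intervalIntegrable a b)
          (((sq_row_cont.add form_sq_cont).div_const 2).intervalIntegrable a b)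
          fun u _ => mul_integral_mul_le_add_div_two hab (hk.uncurry_left u) (hk_nonneg u) hf (f u)
    _ = ∫ u in a..b, f u ^ 2 * row u := by
        rw [intervalIntegral.integral_div, intervalIntegral.integral_add
          (sq_row_cont.intervalIntegrable a b)
          (form_sq_cont.intervalIntegrable a b), swap, add_self_div_two]
    _ ≤ ∫ u in a..b, M * f u ^ 2 :=
        intervalIntegral.integral_mono_on hab
          (sq_row_cont.intervalIntegrable a b)
          (Continuous.intervalIntegrable (by fun_prop) a b) fun u hu => by
            rw [mul_comm M]
            exact mul_le_mul_of_nonneg_left (hk_row u hu) (sq_nonneg _)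
    _ = M * ∫ u in a..b, f u ^ 2 := intervalIntegral.integral_const_mul M _

end SchurTest

/-- The Dirichlet counterpart of `Jneum`, in which the reflected terms carry a minus sign. It is the
kernel through which `deriv (convJ j v)` depends on `deriv v`. It is also applied to a primitive `Φ`
of `j`, where it yields a primitive of `Jneum j u` in the second variable. -/
def Jdir (j : ℝ → ℝ) (u v : ℝ) : ℝ := j (v - u) - j (2 - v - u) - j (-2 - v - u)

section Kernels

variable {j Φ : ℝ → ℝ}

theorem continuous_uncurry_Jneum (hj : Continuous j) : Continuous (Function.uncurry (Jneum j)) := by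
  simp only [Function.uncurry_def, Jneum]
  fun_prop

theorem continuous_uncurry_Jdir (hj : Continuous j) : Continuous (Function.uncurry (Jdir j)) := by
  simp only [Function.uncurry_def, Jdir]
  fun_prop

theorem Jneum_nonneg (hj_nonneg : ∀ u, 0 ≤ j u) (u v : ℝ) : 0 ≤ Jneum j u v :=
  add_nonneg (add_nonneg (hj_nonneg _) (hj_nonneg _)) (hj_nonneg _)

theorem Jneum_symm (hj_even : ∀ u, j (-u) = j u) (u v : ℝ) : Jneum j u v = Jneum j v u := by
  simp only [Jneum, ← hj_even (v - u), neg_sub, sub_right_comm _ u v]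

theorem abs_Jdir_le_Jneum (hj_nonneg : ∀ u, 0 ≤ j u) (u v : ℝ) : |Jdir j u v| ≤ Jneum j u v := by
  simp only [Jdir, Jneum, abs_le]
  constructor <;> linarith [hj_nonneg (v - u), hj_nonneg (2 - v - u), hj_nonneg (-2 - v - u)]

theorem Jdir_one (hj_supp : ∀ u, 2 ≤ |u| → j u = 0) {u : ℝ} (hu : -1 ≤ u) : Jdir j u 1 = 0 := by
  have far : j (-2 - 1 - u) = 0 := hj_supp _ (le_abs.2 (.inr (by linarith)))
  rw [Jdir, far]
  norm_num

theorem Jdir_neg_one (hj_supp : ∀ u, 2 ≤ |u| → j u = 0) {u : ℝ} (hu : u ≤ 1) :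
    Jdir j u (-1) = 0 := by
  have far : j (2 - -1 - u) = 0 := hj_supp _ (le_abs.2 (.inl (by linarith)))
  rw [Jdir, far]
  norm_num

theorem hasDerivAt_Jdir_left (hΦ : ∀ x, HasDerivAt Φ (j x) x) (u v : ℝ) :
    HasDerivAt (fun u => Jdir Φ u v) (-Jdir j u v) u := by
  convert! (((hΦ (v - u)).comp_const_sub v u).sub ((hΦ (2 - v - u)).comp_const_sub (2 - v) u)).sub
    ((hΦ (-2 - v - u)).comp_const_sub (-2 - v) u) using 1
  rw [Jdir]
  ring

theorem hasDerivAt_Jdir_right (hΦ : ∀ x, HasDerivAt Φ (j x) x) (u v : ℝ) :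
    HasDerivAt (Jdir Φ u) (Jneum j u v) v := by
  have reflected (c : ℝ) : HasDerivAt (fun v => Φ (c - v - u)) (-j (c - v - u)) v := by
    simpa only [sub_right_comm c _ u] using
      (hΦ (c - u - v)).comp_const_sub (c - u) v
  convert! (((hΦ (v - u)).comp_sub_const v u).sub (reflected 2)).sub (reflected (-2)) using 1
  rw [Jneum]
  ring

theorem integral_Jneum (hj : Continuous j) (hj_supp : ∀ u, 2 ≤ |u| → j u = 0) {u : ℝ}
    (hu : u ∈ Icc (-1 : ℝ) 1) : ∫ v in (-1 : ℝ)..1, Jneum j u v = ∫ x, j x := by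
  have hint (a b : ℝ) : IntervalIntegrable j volume a b := hj.intervalIntegrable a b
  have direct : ∫ v in (-1 : ℝ)..1, j (v - u) = ∫ x in (-1 - u)..(1 - u), j x :=
    intervalIntegral.integral_comp_sub_right j u
  have reflected (c : ℝ) :
      ∫ v in (-1 : ℝ)..1, j (c - v - u) = ∫ x in (c - 1 - u)..(c + 1 - u), j x := by
    simp only [sub_right_comm c _ u, intervalIntegral.integral_comp_sub_left]
    congr 1
    ring
  have support_subset : Function.support j ⊆ Ioc (-2 - 1 - u) (2 + 1 - u) := fun x hx => by
    have := abs_lt.1 (not_le.1 (mt (hj_supp x) hx))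
    exact ⟨by linarith [hu.1], by linarith [hu.2]⟩
  calc ∫ v in (-1 : ℝ)..1, Jneum j u v
      = (∫ x in (-1 - u)..(1 - u), j x) + (∫ x in (2 - 1 - u)..(2 + 1 - u), j x) +
          ∫ x in (-2 - 1 - u)..(-2 + 1 - u), j x := by
        rw [← direct, ← reflected, ← reflected, ← intervalIntegral.integral_add,
          ← intervalIntegral.integral_add]
        · rfl
        all_goals exact Continuous.intervalIntegrable (by fun_prop) _ _
    _ = ∫ x in (-2 - 1 - u)..(2 + 1 - u), j x := by
        norm_num only
        rw [intervalIntegral.integral_add_adjacent_intervals (hint _ _) (hint _ _), add_comm,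
          intervalIntegral.integral_add_adjacent_intervals (hint _ _) (hint _ _)]
    _ = ∫ x, j x := intervalIntegral.integral_eq_integral_of_support_subset support_subset

end Kernels

section Convolution

variable {j v : ℝ → ℝ}

theorem convJ_eq_sub_integral_Jdir_mul_deriv {Φ : ℝ → ℝ} (hj : Continuous j)
    (hΦ : ∀ x, HasDerivAt Φ (j x) x) (hv : ContDiff ℝ 1 v) (u : ℝ) :
    convJ j v u = Jdir Φ u 1 * v 1 - Jdir Φ u (-1) * v (-1) -
      ∫ y in (-1 : ℝ)..1, Jdir Φ u y * deriv v y := by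
  rw [intervalIntegral.integral_mul_deriv_eq_deriv_mul
    (fun y _ => hasDerivAt_Jdir_right hΦ u y)
    (fun y _ => (hv.differentiable one_ne_zero y).hasDerivAt)
    ((continuous_uncurry_Jneum hj).uncurry_left u |>.intervalIntegrable _ _)
    ((hv.continuous_deriv le_rfl).intervalIntegrable _ _), sub_sub_cancel, convJ]

theorem hasDerivAt_convJ (hj : Continuous j) (hj_supp : ∀ u, 2 ≤ |u| → j u = 0)
    (hv : ContDiff ℝ 1 v) {u : ℝ} (hu : u ∈ Icc (-1 : ℝ) 1) :
    HasDerivAt (convJ j v) (∫ y in (-1 : ℝ)..1, Jdir j u y * deriv v y) u := by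
  obtain ⟨Φ, hΦ⟩ : ∃ Φ : ℝ → ℝ, ∀ x, HasDerivAt Φ (j x) x :=
    ⟨fun x => ∫ t in (0 : ℝ)..x, j t, fun x => (hj.integral_hasStrictDerivAt 0 x).hasDerivAt⟩
  have Φ_cont : Continuous Φ := continuous_iff_continuousAt.2 fun x => (hΦ x).continuousAt
  have v'_cont : Continuous (deriv v) := hv.continuous_deriv le_rfl
  have boundary (y : ℝ) (hy : Jdir j u y = 0) :
      HasDerivAt (fun u => Jdir Φ u y * v y) 0 u := by
    simpa only [hy, neg_zero, zero_mul] using (hasDerivAt_Jdir_left hΦ u y).mul_const (v y)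
  have interior : HasDerivAt (fun u => ∫ y in (-1 : ℝ)..1, Jdir Φ u y * deriv v y)
      (∫ y in (-1 : ℝ)..1, -Jdir j u y * deriv v y) u :=
    hasDerivAt_intervalIntegral_of_continuous (F' := fun u y => -Jdir j u y * deriv v y) (-1) 1 u
      (fun u => ((continuous_uncurry_Jdir Φ_cont).uncurry_left u).mul v'_cont)
      ((continuous_uncurry_Jdir hj).neg.mul (v'_cont.comp continuous_snd))
      fun u y => (hasDerivAt_Jdir_left hΦ u y).mul_const _
  rw [funext (convJ_eq_sub_integral_Jdir_mul_deriv hj hΦ hv)]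
  convert! ((boundary 1 (Jdir_one hj_supp hu.1)).sub
      (boundary (-1) (Jdir_neg_one hj_supp hu.2))).sub interior using 1
  simp only [neg_mul, intervalIntegral.integral_neg, sub_zero, zero_sub, neg_neg]

theorem abs_deriv_convJ_le (hj : Continuous j) (hj_nonneg : ∀ u, 0 ≤ j u)
    (hj_supp : ∀ u, 2 ≤ |u| → j u = 0) (hv : ContDiff ℝ 1 v) {u : ℝ}
    (hu : u ∈ Icc (-1 : ℝ) 1) :
    |deriv (convJ j v) u| ≤ convJ j (fun y => |deriv v y|) u := by
  have v'_cont : Continuous (deriv v) := hv.continuous_deriv le_rfl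
  rw [(hasDerivAt_convJ hj hj_supp hv hu).deriv, convJ, ← Real.norm_eq_abs]
  refine intervalIntegral.norm_integral_le_of_norm_le (by norm_num) (.of_forall fun y _ => ?_)
    (((continuous_uncurry_Jneum hj).uncurry_left u).mul v'_cont.abs |>.intervalIntegrable _ _)
  rw [Real.norm_eq_abs, abs_mul]
  exact mul_le_mul_of_nonneg_right (abs_Jdir_le_Jneum hj_nonneg u y) (abs_nonneg _)

theorem continuous_convJ (hj : Continuous j) (hv : Continuous v) : Continuous (convJ j v) :=
  intervalIntegral.continuous_parametric_intervalIntegral_of_continuous'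
    ((continuous_uncurry_Jneum hj).mul (hv.comp continuous_snd)) (-1) 1

theorem integral_mul_convJ_le (hj : Continuous j) (hj_nonneg : ∀ u, 0 ≤ j u)
    (hj_even : ∀ u, j (-u) = j u) (hj_supp : ∀ u, 2 ≤ |u| → j u = 0) (hv : Continuous v) :
    ∫ u in (-1 : ℝ)..1, v u * convJ j v u ≤ (∫ x, j x) * ∫ u in (-1 : ℝ)..1, v u ^ 2 :=
  integral_mul_integral_mul_le_of_symm (by norm_num) (continuous_uncurry_Jneum hj)
    (Jneum_nonneg hj_nonneg) (Jneum_symm hj_even)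
    (fun _ hu => (integral_Jneum hj hj_supp hu).le) hv

theorem intervalIntegrable_mul_deriv_convJ (hj : Continuous j) (hj_nonneg : ∀ u, 0 ≤ j u)
    (hj_supp : ∀ u, 2 ≤ |u| → j u = 0) (hv : ContDiff ℝ 1 v) {a : ℝ → ℝ} {C : ℝ}
    (ha : AEStronglyMeasurable a (volume.restrict (Icc (-1) 1)))
    (ha_le : ∀ u ∈ Icc (-1 : ℝ) 1, |a u| ≤ C) :
    IntervalIntegrable (fun u => a u * deriv (convJ j v) u) volume (-1) 1 := by
  have v'_cont : Continuous (deriv v) := hv.continuous_deriv le_rfl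
  rw [intervalIntegrable_iff_integrableOn_Icc_of_le (by norm_num)]
  refine Integrable.bdd_mul (c := C) ?_ ha (ae_restrict_of_forall_mem measurableSet_Icc ha_le)
  exact ((continuous_convJ hj v'_cont.abs).integrableOn_Icc).mono'
    (measurable_deriv _).aestronglyMeasurable
    (ae_restrict_of_forall_mem measurableSet_Icc fun u hu =>
      abs_deriv_convJ_le hj hj_nonneg hj_supp hv hu)

end Convolution

theorem nonlocal_coercivity_general {j a v : ℝ → ℝ} {C : ℝ} (hj : Continuous j)
    (hj_nonneg : ∀ u, 0 ≤ j u) (hj_even : ∀ u, j (-u) = j u)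
    (hj_supp : ∀ u, 2 ≤ |u| → j u = 0)
    (ha : AEStronglyMeasurable a (volume.restrict (Icc (-1) 1)))
    (ha_le : ∀ u ∈ Icc (-1 : ℝ) 1, |a u| ≤ C) (hv : ContDiff ℝ 1 v) :
    (1 - C * ∫ x, j x) * ∫ u in (-1 : ℝ)..1, deriv v u ^ 2 ≤
      ∫ u in (-1 : ℝ)..1, deriv v u * (deriv v u - a u * deriv (convJ j v) u) := by
  have v'_cont : Continuous (deriv v) := hv.continuous_deriv le_rfl
  have conv_cont := continuous_convJ hj v'_cont.abs
  have C_nonneg : 0 ≤ C := (abs_nonneg (a 0)).trans (ha_le 0 (by norm_num))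
  have pointwise (u : ℝ) (hu : u ∈ Icc (-1 : ℝ) 1) :
      deriv v u ^ 2 - C * (|deriv v u| * convJ j (fun y => |deriv v y|) u) ≤
        deriv v u * (deriv v u - a u * deriv (convJ j v) u) := by
    have bound : |a u * deriv (convJ j v) u| ≤ C * convJ j (fun y => |deriv v y|) u := by
      rw [abs_mul]
      exact mul_le_mul (ha_le u hu) (abs_deriv_convJ_le hj hj_nonneg hj_supp hv hu)
        (abs_nonneg _) C_nonneg
    have := (le_abs_self _).trans_eq (abs_mul (deriv v u) (a u * deriv (convJ j v) u))
    linarith [mul_le_mul_of_nonneg_left bound (abs_nonneg (deriv v u))]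
  have schur := integral_mul_convJ_le hj hj_nonneg hj_even hj_supp v'_cont.abs
  simp only [sq_abs] at schur
  calc (1 - C * ∫ x, j x) * ∫ u in (-1 : ℝ)..1, deriv v u ^ 2
      ≤ (∫ u in (-1 : ℝ)..1, deriv v u ^ 2) -
          C * ∫ u in (-1 : ℝ)..1, |deriv v u| * convJ j (fun y => |deriv v y|) u := by
        linarith [mul_le_mul_of_nonneg_left schur C_nonneg]
    _ = ∫ u in (-1 : ℝ)..1,
          (deriv v u ^ 2 - C * (|deriv v u| * convJ j (fun y => |deriv v y|) u)) := by
        rw [← intervalIntegral.integral_const_mul, intervalIntegral.integral_sub] <;>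
          exact Continuous.intervalIntegrable (by fun_prop) _ _
    _ ≤ _ :=
        intervalIntegral.integral_mono_on (by norm_num)
          (Continuous.intervalIntegrable (by fun_prop) _ _)
          (((v'_cont.intervalIntegrable _ _).sub (intervalIntegrable_mul_deriv_convJ hj hj_nonneg
            hj_supp hv ha ha_le)).continuousOn_mul v'_cont.continuousOn) pointwise

theorem continuous_chi : Continuous chi := by
  unfold chi
  fun_prop

theorem abs_mul_chi_le {β ρ : ℝ} (hβ : 0 ≤ β) (hρ : ρ ∈ Icc (0 : ℝ) 1) :
    |β * chi ρ| ≤ β / 4 := by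
  have chi_nonneg : 0 ≤ chi ρ := mul_nonneg hρ.1 (sub_nonneg.2 hρ.2)
  have chi_le : chi ρ ≤ 1 / 4 := by
    rw [chi]
    linarith [sq_nonneg (ρ - 1 / 2)]
  rw [abs_of_nonneg (mul_nonneg hβ chi_nonneg)]
  linarith [mul_le_mul_of_nonneg_left chi_le hβ]

/-- coercivity of the nonlocal elliptic operator:
`∫ v' (v' - β χ(ρ₁) (J^neum ⋆ v)') ≥ (1 - β/4) ∫ (v')²`. -/
theorem nonlocal_coercivity
    (j : ℝ → ℝ)
    (hj_smooth : ContDiff ℝ 1 j)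
    (hj_nonneg : ∀ u, 0 ≤ j u)
    (hj_even : ∀ u, j (-u) = j u)
    (hj_supp : ∀ u : ℝ, 1 < |u| → j u = 0)
    (hj_int : (∫ u : ℝ, j u) = 1)
    (β : ℝ) (hβ : 0 ≤ β)
    (ρ₁ : ℝ → ℝ) (hρ₁_cont : ContinuousOn ρ₁ (Icc (-1:ℝ) 1))
    (hρ₁_range : ∀ u ∈ Icc (-1:ℝ) 1, ρ₁ u ∈ Icc (0:ℝ) 1)
    (v : ℝ → ℝ) (hv : ContDiff ℝ 1 v) :
    (1 - β/4) * ∫ u in (-1:ℝ)..1, (deriv v u)^2 ≤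
      ∫ u in (-1:ℝ)..1, deriv v u * (deriv v u - β * chi (ρ₁ u) * deriv (convJ j v) u) := by
  simpa only [hj_int, mul_one] using
    nonlocal_coercivity_general (a := fun u => β * chi (ρ₁ u)) hj_smooth.continuous hj_nonneg
      hj_even (fun u hu => hj_supp u (one_lt_two.trans_le hu))
      ((continuousOn_const.mul (continuous_chi.comp_continuousOn hρ₁_cont)).aestronglyMeasurable
        measurableSet_Icc)
      (fun u hu => abs_mul_chi_le hβ (hρ₁_range u hu)) hv

end
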